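/- Let p₁, p₂, q₁, q₂ be ℂ-valued functions on the positive integers, nowhere vanishing, whose invariants agree: p₁(n)p₁(n+1)q₂(n+1) = q₁(n)q₁(n+1)p₂(n+1) for all n ≥ 1. Suppose moreover that for all n ≥ 1, q₁(n)/p₁(n) = w·∏_{i=1}^{r}(n+uᵢ) / ∏_{j=1}^{s}(n+vⱼ), where w ∈ ℂ, w ≠ 0, and u₁,…,u_r, v₁,…,v_s ∈ ℂ are none of them negative integers or zero (so that n+uᵢ+1 and n+vⱼ+1 are never nonpositive integers for n ∈ ℕ). Then for every sequence D : ℕ → ℂ satisfying Dₙ = q₁(n)D_{n−1} + q₂(n)D_{n−2} for all n ≥ 2, the sequence Cₙ := w^{−(n+1)}·(∏_{j=1}^{s}Γ(n+vⱼ+1) / ∏_{i=1}^{r}Γ(n+uᵢ+1))·Dₙ satisfies Cₙ = p₁(n)C_{n−1} + p₂(n)C_{n−2} for all n ≥ 2, and this correspondence is a bijection between the two solution sets. -/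

import Mathlib

open scoped BigOperators

/-!
Multiplication by a sequence `lam` with `lam n * q₁ n = p₁ n * lam (n - 1)` matches the first
coefficients of the two recurrences, and equality of the invariants is exactly what makes it match
the second coefficients as well. If `q₁ / p₁` is a rational function split into linear factors,
then `Γ (z + 1) = z * Γ z` solves the first-order equation for `lam` factor by factor.
-/

section Recurrence

/-- The sequences satisfying the second-order linear recurrence
`x n = a n * x (n - 1) + b n * x (n - 2)` for `n ≥ 2`, with the two initial values free. -/
def solutionSet {R : Type*} [Semiring R] (a b : ℕ → R) : Set (ℕ → R) :=
  {x | ∀ n, 2 ≤ n → x n = a n * x (n - 1) + b n * x (n - 2)}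

theorem mem_solutionSet_iff {R : Type*} [Semiring R] {a b x : ℕ → R} :
    x ∈ solutionSet a b ↔ ∀ n, x (n + 2) = a (n + 2) * x (n + 1) + b (n + 2) * x n := by
  refine ⟨fun h n => h (n + 2) (Nat.le_add_left 2 n), fun h n hn => ?_⟩
  obtain ⟨m, rfl⟩ := Nat.exists_eq_add_of_le' hn
  exact h m

variable {R : Type*} [CommRing R] {p₁ p₂ q₁ q₂ lam : ℕ → R}

theorem mul_mem_solutionSet_iff (hlam : ∀ n, IsUnit (lam n))
    (h₁ : ∀ n, lam (n + 2) * q₁ (n + 2) = p₁ (n + 2) * lam (n + 1))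
    (h₂ : ∀ n, lam (n + 2) * q₂ (n + 2) = p₂ (n + 2) * lam n) (D : ℕ → R) :
    lam * D ∈ solutionSet p₁ p₂ ↔ D ∈ solutionSet q₁ q₂ := by
  simp only [mem_solutionSet_iff, Pi.mul_apply]
  refine forall_congr' fun n => ?_
  have transform : p₁ (n + 2) * (lam (n + 1) * D (n + 1)) + p₂ (n + 2) * (lam n * D n) =
      lam (n + 2) * (q₁ (n + 2) * D (n + 1) + q₂ (n + 2) * D n) := by
    linear_combination -D (n + 1) * h₁ n - D n * h₂ n
  rw [transform, (hlam (n + 2)).mul_right_inj]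

theorem bijOn_mul_solutionSet (hlam : ∀ n, IsUnit (lam n))
    (h₁ : ∀ n, lam (n + 2) * q₁ (n + 2) = p₁ (n + 2) * lam (n + 1))
    (h₂ : ∀ n, lam (n + 2) * q₂ (n + 2) = p₂ (n + 2) * lam n) :
    Set.BijOn (lam * ·) (solutionSet q₁ q₂) (solutionSet p₁ p₂) :=
  (Pi.isUnit_iff.2 hlam).unit.mulLeft.bijOn (mul_mem_solutionSet_iff hlam h₁ h₂)

theorem mul_second_coeff_of_invariant_eq [NoZeroDivisors R] (hp₁ : ∀ n, 1 ≤ n → p₁ n ≠ 0)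
    (hinv : ∀ n, 1 ≤ n → p₁ n * p₁ (n + 1) * q₂ (n + 1) = q₁ n * q₁ (n + 1) * p₂ (n + 1))
    (hlam : ∀ n, lam (n + 1) * q₁ (n + 1) = p₁ (n + 1) * lam n) (n : ℕ) :
    lam (n + 2) * q₂ (n + 2) = p₂ (n + 2) * lam n := by
  have hp : p₁ (n + 1) * p₁ (n + 2) ≠ 0 :=
    mul_ne_zero (hp₁ _ (Nat.le_add_left 1 n)) (hp₁ _ (Nat.le_add_left 1 (n + 1)))
  apply mul_left_cancel₀ hp
  calc p₁ (n + 1) * p₁ (n + 2) * (lam (n + 2) * q₂ (n + 2))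
      = lam (n + 2) * (p₁ (n + 1) * p₁ (n + 2) * q₂ (n + 2)) := by ring
    _ = lam (n + 2) * (q₁ (n + 1) * q₁ (n + 2) * p₂ (n + 2)) := by
        rw [hinv (n + 1) (Nat.le_add_left 1 n)]
    _ = lam (n + 2) * q₁ (n + 2) * q₁ (n + 1) * p₂ (n + 2) := by ring
    _ = p₁ (n + 2) * (lam (n + 1) * q₁ (n + 1)) * p₂ (n + 2) := by rw [hlam (n + 1)]; ring
    _ = p₁ (n + 1) * p₁ (n + 2) * (p₂ (n + 2) * lam n) := by rw [hlam n]; ring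

theorem bijOn_mul_solutionSet_of_invariant_eq [NoZeroDivisors R]
    (hp₁ : ∀ n, 1 ≤ n → p₁ n ≠ 0)
    (hinv : ∀ n, 1 ≤ n → p₁ n * p₁ (n + 1) * q₂ (n + 1) = q₁ n * q₁ (n + 1) * p₂ (n + 1))
    (hunit : ∀ n, IsUnit (lam n))
    (hlam : ∀ n, lam (n + 1) * q₁ (n + 1) = p₁ (n + 1) * lam n) :
    Set.BijOn (lam * ·) (solutionSet q₁ q₂) (solutionSet p₁ p₂) :=
  bijOn_mul_solutionSet hunit (fun n => hlam (n + 1))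
    (mul_second_coeff_of_invariant_eq hp₁ hinv hlam)

end Recurrence

section GammaProducts

variable {ι κ : Type*} [Fintype ι] [Fintype κ] {u : ι → ℂ} {v : κ → ℂ} {w : ℂ}

theorem natCast_succ_add_ne_zero {x : ℂ} (hx : ∀ k : ℕ, x ≠ -((k + 1 : ℕ) : ℂ)) (n : ℕ) :
    ((n + 1 : ℕ) : ℂ) + x ≠ 0 :=
  fun h => hx n (eq_neg_of_add_eq_zero_right h)

theorem prod_natCast_succ_add_ne_zero (hu : ∀ i, ∀ k : ℕ, u i ≠ -((k + 1 : ℕ) : ℂ)) (n : ℕ) :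
    ∏ i, (((n + 1 : ℕ) : ℂ) + u i) ≠ 0 :=
  Finset.prod_ne_zero_iff.2 fun i _ => natCast_succ_add_ne_zero (hu i) n

theorem prod_Gamma_natCast_add_ne_zero (hu : ∀ i, ∀ k : ℕ, u i ≠ -((k + 1 : ℕ) : ℂ)) (n : ℕ) :
    ∏ i, Complex.Gamma ((n : ℂ) + u i + 1) ≠ 0 := by
  refine Finset.prod_ne_zero_iff.2 fun i _ => Complex.Gamma_ne_zero fun m h => hu i (n + m) ?_
  push_cast
  linear_combination h

theorem prod_Gamma_natCast_succ_add (hu : ∀ i, ∀ k : ℕ, u i ≠ -((k + 1 : ℕ) : ℂ)) (n : ℕ) :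
    ∏ i, Complex.Gamma (((n + 1 : ℕ) : ℂ) + u i + 1) =
      (∏ i, (((n + 1 : ℕ) : ℂ) + u i)) * ∏ i, Complex.Gamma ((n : ℂ) + u i + 1) := by
  rw [← Finset.prod_mul_distrib]
  refine Finset.prod_congr rfl fun i _ => ?_
  rw [Complex.Gamma_add_one _ (natCast_succ_add_ne_zero (hu i) n), Nat.cast_succ,
    add_right_comm (n : ℂ) 1 (u i)]

/-- The multiplier `w ^ (-(n + 1)) * ∏ⱼ Γ(n + vⱼ + 1) / ∏ᵢ Γ(n + uᵢ + 1)` that carries solutions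
of the `q`-recurrence to solutions of the `p`-recurrence. -/
noncomputable def gammaMultiplier (w : ℂ) (u : ι → ℂ) (v : κ → ℂ) (n : ℕ) : ℂ :=
  w ^ (-((n : ℤ) + 1)) *
    ((∏ j, Complex.Gamma ((n : ℂ) + v j + 1)) / ∏ i, Complex.Gamma ((n : ℂ) + u i + 1))

theorem gammaMultiplier_ne_zero (hw : w ≠ 0) (hu : ∀ i, ∀ k : ℕ, u i ≠ -((k + 1 : ℕ) : ℂ))
    (hv : ∀ j, ∀ k : ℕ, v j ≠ -((k + 1 : ℕ) : ℂ)) (n : ℕ) : gammaMultiplier w u v n ≠ 0 :=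
  mul_ne_zero (zpow_ne_zero _ hw)
    (div_ne_zero (prod_Gamma_natCast_add_ne_zero hv n) (prod_Gamma_natCast_add_ne_zero hu n))

theorem gammaMultiplier_succ_mul (hw : w ≠ 0) (hu : ∀ i, ∀ k : ℕ, u i ≠ -((k + 1 : ℕ) : ℂ))
    (hv : ∀ j, ∀ k : ℕ, v j ≠ -((k + 1 : ℕ) : ℂ)) (n : ℕ) :
    gammaMultiplier w u v (n + 1) *
        (w * (∏ i, (((n + 1 : ℕ) : ℂ) + u i)) / ∏ j, (((n + 1 : ℕ) : ℂ) + v j)) =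
      gammaMultiplier w u v n := by
  have hzpow : w ^ (-((n : ℤ) + 1)) = w ^ (-(((n + 1 : ℕ) : ℤ) + 1)) * w := by
    rw [← zpow_add_one₀ hw]
    congr 1
  have hU := prod_natCast_succ_add_ne_zero hu n
  have hV := prod_natCast_succ_add_ne_zero hv n
  simp only [gammaMultiplier]
  rw [hzpow, prod_Gamma_natCast_succ_add hu, prod_Gamma_natCast_succ_add hv,
    mul_div_mul_comm]
  field_simp

theorem stmt_12_general {p₁ p₂ q₁ q₂ : ℕ → ℂ} (hp₁ : ∀ n, 1 ≤ n → p₁ n ≠ 0)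
    (hinv : ∀ n, 1 ≤ n → p₁ n * p₁ (n + 1) * q₂ (n + 1) = q₁ n * q₁ (n + 1) * p₂ (n + 1))
    (hw : w ≠ 0) (hu : ∀ i, ∀ k : ℕ, u i ≠ -((k + 1 : ℕ) : ℂ))
    (hv : ∀ j, ∀ k : ℕ, v j ≠ -((k + 1 : ℕ) : ℂ))
    (hratio : ∀ n : ℕ, 1 ≤ n →
      q₁ n / p₁ n = w * (∏ i, ((n : ℂ) + u i)) / ∏ j, ((n : ℂ) + v j)) :
    Set.BijOn (gammaMultiplier w u v * ·) (solutionSet q₁ q₂) (solutionSet p₁ p₂) := by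
  refine bijOn_mul_solutionSet_of_invariant_eq hp₁ hinv
    (fun n => (gammaMultiplier_ne_zero hw hu hv n).isUnit) fun n => ?_
  have hn : 1 ≤ n + 1 := Nat.le_add_left 1 n
  rw [← gammaMultiplier_succ_mul hw hu hv n, ← hratio (n + 1) hn, mul_left_comm,
    mul_div_cancel₀ _ (hp₁ (n + 1) hn)]

end GammaProducts

/-- Gamma-product form of the equivalence between two second-order difference
equations with equal invariants, when `q₁(n)/p₁(n) = w ∏ᵢ(n+uᵢ)/∏ⱼ(n+vⱼ)`:
the map `D ↦ C`, `Cₙ = w^{−(n+1)} (∏ⱼΓ(n+vⱼ+1)/∏ᵢΓ(n+uᵢ+1)) Dₙ`, carries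
solutions of the `q`-recurrence to solutions of the `p`-recurrence, bijectively. -/
theorem stmt_12 (p₁ p₂ q₁ q₂ : ℕ → ℂ)
    (hp₁ : ∀ n, 1 ≤ n → p₁ n ≠ 0) (hp₂ : ∀ n, 1 ≤ n → p₂ n ≠ 0)
    (hq₁ : ∀ n, 1 ≤ n → q₁ n ≠ 0) (hq₂ : ∀ n, 1 ≤ n → q₂ n ≠ 0)
    (hinv : ∀ n, 1 ≤ n → p₁ n * p₁ (n + 1) * q₂ (n + 1) = q₁ n * q₁ (n + 1) * p₂ (n + 1))
    (r s : ℕ) (u : Fin r → ℂ) (v : Fin s → ℂ) (w : ℂ) (hw : w ≠ 0)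
    (hu : ∀ i, ∀ k : ℕ, u i ≠ -(k : ℂ)) (hv : ∀ j, ∀ k : ℕ, v j ≠ -(k : ℂ))
    (hratio : ∀ n : ℕ, 1 ≤ n →
      q₁ n / p₁ n = w * (∏ i, ((n : ℂ) + u i)) / ∏ j, ((n : ℂ) + v j)) :
    (∀ D : ℕ → ℂ, (∀ n : ℕ, 2 ≤ n → D n = q₁ n * D (n - 1) + q₂ n * D (n - 2)) →
        ∀ n : ℕ, 2 ≤ n →
          (w ^ (-((n : ℤ) + 1))
              * ((∏ j, Complex.Gamma ((n : ℂ) + v j + 1))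
                  / ∏ i, Complex.Gamma ((n : ℂ) + u i + 1)) * D n)
            = p₁ n * (w ^ (-(((n : ℤ) - 1) + 1))
                * ((∏ j, Complex.Gamma (((n : ℂ) - 1) + v j + 1))
                    / ∏ i, Complex.Gamma (((n : ℂ) - 1) + u i + 1)) * D (n - 1))
              + p₂ n * (w ^ (-(((n : ℤ) - 2) + 1))
                * ((∏ j, Complex.Gamma (((n : ℂ) - 2) + v j + 1))
                    / ∏ i, Complex.Gamma (((n : ℂ) - 2) + u i + 1)) * D (n - 2)))
    ∧ Set.BijOn
        (fun D : ℕ → ℂ => fun n : ℕ =>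
          w ^ (-((n : ℤ) + 1))
            * ((∏ j, Complex.Gamma ((n : ℂ) + v j + 1))
                / ∏ i, Complex.Gamma ((n : ℂ) + u i + 1)) * D n)
        {D : ℕ → ℂ | ∀ n, 2 ≤ n → D n = q₁ n * D (n - 1) + q₂ n * D (n - 2)}
        {C : ℕ → ℂ | ∀ n, 2 ≤ n → C n = p₁ n * C (n - 1) + p₂ n * C (n - 2)} := by
  have hbij := stmt_12_general hp₁ hinv hw (fun i k => hu i (k + 1)) (fun j k => hv j (k + 1))
    hratio
  refine ⟨fun D hD n hn => ?_, hbij⟩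
  simpa only [gammaMultiplier, Pi.mul_apply, Nat.cast_sub hn, Nat.cast_sub (one_le_two.trans hn),
    Nat.cast_one, Nat.cast_ofNat] using hbij.mapsTo hD n hn
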